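/- arXiv:1801.05338 — 2 statements merged into one kernel-verified Lean document; each statement's English description precedes it below -/
import Mathlib

section
/- Let σ₀ ∈ {1, −1}, let τ ∈ ℝ, and let s₁, s₂ : ℝ → ℂ satisfy s₁(t) = s₂(t) for all t ≤ τ. Define F_i(y) = −s_i(−y/2)/2 for i = 1, 2. Then: (i) F₁(y) = F₂(y) for all y ≥ −2τ; (ii) for every function K : ℝ × ℝ → ℂ and every (x, y) with x ≥ −τ and y ≥ −τ, K satisfies the GLME for F₁ at (x, y) if and only if K satisfies the GLME for F₂ at (x, y); (iii) if K₁ satisfies the GLME for F₁ at every point of the region {(x,y) : x, y ≥ −τ}, K₂ satisfies the GLME for F₂ at every point of that region, and any two functions satisfying the GLME for F₁ at every point of that region agree on that region, then the time-reversed signals r_i(t) = −2·K_i(−t, −t) satisfy r₁(t) = r₂(t) for all t ≤ τ. (Corollary 1: in the NIS modulation the noiseless optical signal r(t) for t ≤ τ depends only on the values of the QAM signal s(t) for t ≤ τ.) -/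
/-!
At a point of the region `x, y ≥ -τ` the GLME evaluates its kernel only at arguments `≥ -2τ`,
and the kernels of two signals that agree up to time `τ` coincide there. The two equations are
therefore the same on the region, and uniqueness for the first identifies the two solutions,
in particular on the diagonal points `(-t, -t)` with `t ≤ τ`.
-/

open MeasureTheory

/-- `K` satisfies the Gelfand–Levitan–Marchenko equation for kernel function `F`
(with sign `σ₀`) at the point `(x, y)`:
`K(x,y) − σ₀ conj(F(x+y)) + σ₀ ∫_x^∞ ∫_x^∞ K(x,r) F(r+s) conj(F(s+y)) dr ds = 0`. -/
noncomputable def satGLME (σ₀ : ℝ) (F : ℝ → ℂ) (K : ℝ × ℝ → ℂ) (x y : ℝ) : Prop :=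
  K (x, y) - (σ₀ : ℂ) * (starRingEnd ℂ) (F (x + y)) +
    (σ₀ : ℂ) * ∫ r in Set.Ioi x, ∫ s in Set.Ioi x,
      K (x, r) * F (r + s) * (starRingEnd ℂ) (F (s + y)) = 0

/-- Corollary 1: if two QAM signals `s₁, s₂` agree for `t ≤ τ` and
`Fᵢ(y) = −sᵢ(−y/2)/2` are the corresponding GLME kernels, then
(i) `F₁ = F₂` on `[−2τ, ∞)`;
(ii) on the region `{x, y ≥ −τ}` the GLME for `F₁` and the GLME for `F₂` are satisfied
by exactly the same functions at each point;
(iii) if `K₁` solves the GLME for `F₁` on that region, `K₂` solves the GLME for `F₂`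
on that region, and the GLME for `F₁` has a unique solution on that region, then the
optical signals `rᵢ(t) = −2 Kᵢ(−t, −t)` agree for all `t ≤ τ` — i.e. the noiseless
optical signal for `t ≤ τ` depends only on the values of the QAM signal for `t ≤ τ`. -/
theorem nis_optical_signal_causality (σ₀ : ℝ) (hσ : σ₀ = 1 ∨ σ₀ = -1) (τ : ℝ)
    (s₁ s₂ : ℝ → ℂ) (hs : ∀ t : ℝ, t ≤ τ → s₁ t = s₂ t)
    (F₁ F₂ : ℝ → ℂ)
    (hF₁ : ∀ y : ℝ, F₁ y = -s₁ (-y / 2) / 2)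
    (hF₂ : ∀ y : ℝ, F₂ y = -s₂ (-y / 2) / 2) :
    (∀ y : ℝ, -(2 * τ) ≤ y → F₁ y = F₂ y) ∧
    (∀ (K : ℝ × ℝ → ℂ) (x y : ℝ), -τ ≤ x → -τ ≤ y →
      (satGLME σ₀ F₁ K x y ↔ satGLME σ₀ F₂ K x y)) ∧
    (∀ K₁ K₂ : ℝ × ℝ → ℂ,
      (∀ x y : ℝ, -τ ≤ x → -τ ≤ y → satGLME σ₀ F₁ K₁ x y) →
      (∀ x y : ℝ, -τ ≤ x → -τ ≤ y → satGLME σ₀ F₂ K₂ x y) →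
      (∀ K K' : ℝ × ℝ → ℂ,
        (∀ x y : ℝ, -τ ≤ x → -τ ≤ y → satGLME σ₀ F₁ K x y) →
        (∀ x y : ℝ, -τ ≤ x → -τ ≤ y → satGLME σ₀ F₁ K' x y) →
        ∀ x y : ℝ, -τ ≤ x → -τ ≤ y → K (x, y) = K' (x, y)) →
      ∀ t : ℝ, t ≤ τ → -2 * K₁ (-t, -t) = -2 * K₂ (-t, -t)) := by
  have hF : ∀ y : ℝ, -(2 * τ) ≤ y → F₁ y = F₂ y := by
    intro y hy
    rw [hF₁, hF₂, hs _ (by linarith)]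
  have hK : ∀ (K : ℝ × ℝ → ℂ) (x y : ℝ), -τ ≤ x → -τ ≤ y →
      (satGLME σ₀ F₁ K x y ↔ satGLME σ₀ F₂ K x y) := by
    intro K x y hx hy
    -- For `r, s > x ≥ -τ` and `y ≥ -τ`, the arguments `x + y`, `r + s`, `s + y` are all `≥ -2τ`.
    have hint : (∫ r in Set.Ioi x, ∫ s in Set.Ioi x,
          K (x, r) * F₁ (r + s) * (starRingEnd ℂ) (F₁ (s + y))) =
        ∫ r in Set.Ioi x, ∫ s in Set.Ioi x,
          K (x, r) * F₂ (r + s) * (starRingEnd ℂ) (F₂ (s + y)) := by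
      refine setIntegral_congr_fun measurableSet_Ioi fun r hr => ?_
      refine setIntegral_congr_fun measurableSet_Ioi fun s hs' => ?_
      have hr' : x < r := hr
      have hs'' : x < s := hs'
      simp only [hF (r + s) (by linarith), hF (s + y) (by linarith)]
    unfold satGLME
    rw [hint, hF (x + y) (by linarith)]
  refine ⟨hF, hK, fun K₁ K₂ h₁ h₂ huniq t ht => ?_⟩
  rw [huniq K₁ K₂ h₁ (fun x y hx hy => (hK K₂ x y hx hy).2 (h₂ x y hx hy)) (-t) (-t)
    (by linarith) (by linarith)]
end

section
/- Let σ₀ ∈ {1, −1}, T_s > 0, and let g : ℝ → ℂ satisfy g(t) = 0 whenever |t| ≥ T_s/2. Let N_b ∈ ℕ, let x, x' : Fin N_b → ℂ be two symbol sequences, and let k ≤ N_b be such that x_j = x'_j for all j ≤ k; set t_k = (k − 1/2)·T_s. Define the QAM signals s(t) = Σ_{j=1}^{N_b} x_j·g(t − (j−1)·T_s) and s'(t) = Σ_{j=1}^{N_b} x'_j·g(t − (j−1)·T_s), and the kernels F(y) = −s(−y/2)/2 and F'(y) = −s'(−y/2)/2. Suppose K satisfies the GLME for F at every point of the region {(x,y)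 : x, y ≥ −t_k}, K' satisfies the GLME for F' at every point of that region, and any two functions satisfying the GLME for F at every point of that region agree on that region. Then −2·K(−t, −t) = −2·K'(−t, −t) for all t ≤ t_k. (Corollary 2: if the pulse shape has finite duration at most T_s, then for t ≤ t_k the optical signal r(t) depends only on the symbols x_1, …, x_k and not on the following ones.) -/
/-!
The pulses carrying the symbols after the `k`-th one are supported in `t > t_k`, so `s` and `s'`
agree for `t ≤ t_k` and the kernels `F` and `F'` agree on `[-2 t_k, ∞)`. At a point of the region
`x, y ≥ -t_k` all arguments `x + y`, `r + s`, `s + y` (with `r, s > x`) lie in that half-line, so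
the equations for `F` and `F'` coincide there; `K'` thus solves the equation for `F` and uniqueness
gives `K = K'` on the region, in particular at the diagonal points `(-t, -t)` with `t ≤ t_k`.
-/

open MeasureTheory

/-- Corollary 2: if the pulse shape `g` has finite duration at most `T_s` (it vanishes
outside `(−T_s/2, T_s/2)`), the two symbol sequences `x, x'` agree on their first `k`
symbols, `s, s'` are the corresponding QAM signals with GLME kernels
`F(y) = −s(−y/2)/2` and `F'(y) = −s'(−y/2)/2`, `K` solves the GLME for `F` on the
region `{(x,y) : x, y ≥ −t_k}` (with `t_k = (k − 1/2) T_s`), `K'` solves the GLME for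
`F'` on that region, and the GLME for `F` has a unique solution on that region, then
the optical signals `r(t) = −2 K(−t,−t)` and `r'(t) = −2 K'(−t,−t)` agree for all
`t ≤ t_k`: the optical signal up to time `t_k` depends only on the symbols
`x_1, …, x_k` and not on the following ones. -/
theorem nis_symbol_causality (σ₀ : ℝ) (hσ : σ₀ = 1 ∨ σ₀ = -1)
    (T_s : ℝ) (hT : 0 < T_s) (g : ℝ → ℂ)
    (hg : ∀ t : ℝ, T_s / 2 ≤ |t| → g t = 0)
    (N_b : ℕ) (x x' : Fin N_b → ℂ) (k : ℕ) (hk : k ≤ N_b)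
    (hxx : ∀ j : Fin N_b, (j : ℕ) < k → x j = x' j)
    (t_k : ℝ) (ht_k : t_k = ((k : ℝ) - 1 / 2) * T_s)
    (s s' : ℝ → ℂ)
    (hs : ∀ t : ℝ, s t = ∑ j : Fin N_b, x j * g (t - (j : ℕ) * T_s))
    (hs' : ∀ t : ℝ, s' t = ∑ j : Fin N_b, x' j * g (t - (j : ℕ) * T_s))
    (F F' : ℝ → ℂ)
    (hF : ∀ y : ℝ, F y = -s (-y / 2) / 2)
    (hF' : ∀ y : ℝ, F' y = -s' (-y / 2) / 2)
    (K K' : ℝ × ℝ → ℂ)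
    (hK : ∀ x y : ℝ, -t_k ≤ x → -t_k ≤ y → satGLME σ₀ F K x y)
    (hK' : ∀ x y : ℝ, -t_k ≤ x → -t_k ≤ y → satGLME σ₀ F' K' x y)
    (huniq : ∀ L L' : ℝ × ℝ → ℂ,
      (∀ x y : ℝ, -t_k ≤ x → -t_k ≤ y → satGLME σ₀ F L x y) →
      (∀ x y : ℝ, -t_k ≤ x → -t_k ≤ y → satGLME σ₀ F L' x y) →
      ∀ x y : ℝ, -t_k ≤ x → -t_k ≤ y → L (x, y) = L' (x, y)) :
    ∀ t : ℝ, t ≤ t_k → -2 * K (-t, -t) = -2 * K' (-t, -t) := by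
  -- Pulse `j ≥ k` is supported after time `t_k`, so the two signals agree up to `t_k`.
  have hsig : ∀ t : ℝ, t ≤ t_k → s t = s' t := by
    intro t ht
    rw [hs, hs']
    refine Finset.sum_congr rfl fun j _ => ?_
    by_cases hj : (j : ℕ) < k
    · rw [hxx j hj]
    · have hkj : (k : ℝ) ≤ ((j : ℕ) : ℝ) := by exact_mod_cast not_lt.mp hj
      have hmul := mul_le_mul_of_nonneg_right hkj hT.le
      have hzero : g (t - (j : ℕ) * T_s) = 0 := by
        apply hg
        rw [le_abs]
        right
        linarith
      rw [hzero, mul_zero, mul_zero]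
  have hFF : ∀ z : ℝ, -(2 * t_k) ≤ z → F z = F' z := by
    intro z hz
    rw [hF, hF', hsig _ (by linarith)]
  -- On the region the equation only evaluates the kernel on `[-2 t_k, ∞)`,
  -- so `K'` also solves the equation for `F`.
  have hK'F : ∀ a b : ℝ, -t_k ≤ a → -t_k ≤ b → satGLME σ₀ F K' a b := by
    intro a b ha hb
    have h := hK' a b ha hb
    unfold satGLME at h ⊢
    have hint : (∫ r in Set.Ioi a, ∫ s in Set.Ioi a,
          K' (a, r) * F (r + s) * (starRingEnd ℂ) (F (s + b))) =
        ∫ r in Set.Ioi a, ∫ s in Set.Ioi a,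
          K' (a, r) * F' (r + s) * (starRingEnd ℂ) (F' (s + b)) := by
      refine setIntegral_congr_fun measurableSet_Ioi fun r hr => ?_
      refine setIntegral_congr_fun measurableSet_Ioi fun q hq => ?_
      have hr' : a < r := hr
      have hq' : a < q := hq
      simp only [hFF (r + q) (by linarith), hFF (q + b) (by linarith)]
    rw [hint, hFF (a + b) (by linarith)]
    exact h
  intro t ht
  rw [huniq K K' hK hK'F (-t) (-t) (by linarith) (by linarith)]
end
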